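/- There exists a constant C > 0 such that for all k ∈ ℕ, all u ∈ [−1,1] and all γ ∈ [0,1], |H_k(0) − H_k(u)| ≤ C · |u|^γ · (k+1)^{γ/4}. -/

import Mathlib

/-!
Write `q = hermiteN k`. Since `q'' = x q' - k q`, the energy `E = (q')² + k q²` satisfies
`E' = 2 x (q')² ≤ 2 x E` for `x ≥ 0`, with the inequality reversed for `x ≤ 0`, so `E(x) exp(-x²)`
is maximal at the origin. There `H_{k+2}(0)² = (k+1)/(k+2) H_k(0)²` gives `H_k(0)² ≤ (k+1)^{-1/2}`,
and `q'(0)² = (k+1) H_{k+1}(0)²`, so that `E(0) ≤ 2 (k+1)^{1/2}`. Hence `q` is of order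
`(k+1)^{-1/4}` and `q'` of order `(k+1)^{1/4}`, up to a factor `exp(x²/2)`. The increment of `q` is
bounded by the first estimate directly and by the second through the mean value theorem; the
geometric mean of the two bounds with weights `1 - γ` and `γ` gives the claim.
-/

open Polynomial

/-- Normalized (probabilist's) Hermite polynomial, orthonormal in `L²(ℝ, γ)`. -/
noncomputable def hermiteN (k : ℕ) : Polynomial ℝ :=
  Polynomial.C ((Real.sqrt (Nat.factorial k))⁻¹) *
    (Polynomial.hermite k).map (Int.castRingHom ℝ)

lemma le_mul_rpow_one_sub_mul_rpow {d a x y γ : ℝ} (hd : 0 ≤ d) (ha : 0 ≤ a) (hx : 0 ≤ x)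
    (hy : 0 ≤ y) (hdx : d ≤ a * x) (hdy : d ≤ a * y) (hγ : γ ∈ Set.Icc (0 : ℝ) 1) :
    d ≤ a * (x ^ (1 - γ) * y ^ γ) := by
  have hγ₀ : 0 ≤ γ := hγ.1
  have hγ₁ : 0 ≤ 1 - γ := sub_nonneg.2 hγ.2
  have hsplit {b : ℝ} (hb : 0 ≤ b) : b ^ (1 - γ) * b ^ γ = b := by
    rw [← Real.rpow_add_of_nonneg hb hγ₁ hγ₀, sub_add_cancel, Real.rpow_one]
  calc d = d ^ (1 - γ) * d ^ γ := (hsplit hd).symm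
    _ ≤ (a * x) ^ (1 - γ) * (a * y) ^ γ := by gcongr
    _ = a ^ (1 - γ) * a ^ γ * (x ^ (1 - γ) * y ^ γ) := by
        rw [Real.mul_rpow ha hx, Real.mul_rpow ha hy, mul_mul_mul_comm]
    _ = a * (x ^ (1 - γ) * y ^ γ) := by rw [hsplit ha]

lemma le_apply_zero_of_mul_deriv_nonpos {g g' : ℝ → ℝ} (hg : ∀ x, HasDerivAt g (g' x) x)
    (hg' : ∀ x, x * g' x ≤ 0) (x : ℝ) : g x ≤ g 0 := by
  have hray (t : ℝ) : HasDerivAt (fun t ↦ g (t * x)) (g' (t * x) * x) t :=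
    (hg (t * x)).comp t (hasDerivAt_mul_const x)
  have hanti : AntitoneOn (fun t ↦ g (t * x)) (Set.Ici 0) := by
    refine antitoneOn_of_hasDerivWithinAt_nonpos (convex_Ici 0)
      (fun t _ ↦ (hray t).continuousAt.continuousWithinAt)
      (fun t _ ↦ (hray t).hasDerivWithinAt) fun t ht ↦ ?_
    rw [interior_Ici, Set.mem_Ioi] at ht
    exact nonpos_of_mul_nonpos_right (by linarith [hg' (t * x)]) ht
  simpa only [one_mul, zero_mul] using
    hanti Set.self_mem_Ici (Set.mem_Ici.2 zero_le_one) zero_le_one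

lemma energy_le_exp_sq_mul_of_hermite_ode {f f' : ℝ → ℝ} {c : ℝ} (hc : 0 ≤ c)
    (hf : ∀ x, HasDerivAt f (f' x) x) (hf' : ∀ x, HasDerivAt f' (x * f' x - c * f x) x) (u : ℝ) :
    f' u ^ 2 + c * f u ^ 2 ≤ Real.exp (u ^ 2) * (f' 0 ^ 2 + c * f 0 ^ 2) := by
  have hderiv (x : ℝ) : HasDerivAt (fun x ↦ (f' x ^ 2 + c * f x ^ 2) * Real.exp (-x ^ 2))
      (-(2 * x * (c * f x ^ 2)) * Real.exp (-x ^ 2)) x := by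
    refine ((((hf' x).fun_pow 2).fun_add (((hf x).fun_pow 2).const_mul c)).fun_mul
      ((hasDerivAt_pow 2 x).fun_neg.exp)).congr_deriv ?_
    push_cast
    ring
  have hmax := le_apply_zero_of_mul_deriv_nonpos hderiv (fun x ↦ by
    have : 0 ≤ 2 * x ^ 2 * (c * f x ^ 2) * Real.exp (-x ^ 2) := by positivity
    linarith) u
  simp only [ne_eq, OfNat.ofNat_ne_zero, not_false_eq_true, zero_pow, neg_zero, Real.exp_zero,
    mul_one] at hmax
  rwa [Real.exp_neg, ← div_eq_mul_inv, div_le_iff₀' (Real.exp_pos _)] at hmax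

lemma derivative_hermite_succ (n : ℕ) :
    derivative (hermite (n + 1)) = ((n : ℤ[X]) + 1) * hermite n := by
  induction n with
  | zero => simp
  | succ n ih =>
    rw [hermite_succ (n + 1), derivative_sub, derivative_mul, ih, derivative_mul,
      hermite_succ n]
    simp only [derivative_X, one_mul, derivative_add, derivative_natCast, derivative_one, add_zero,
      zero_mul, zero_add, Nat.cast_add, Nat.cast_one]
    ring

lemma sqrt_succ_mul_inv_sqrt_factorial_succ (k : ℕ) :
    √((k : ℝ) + 1) * (√((k + 1).factorial : ℝ))⁻¹ = (√(k.factorial : ℝ))⁻¹ := by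
  rw [Nat.factorial_succ, Nat.cast_mul, Nat.cast_succ, Real.sqrt_mul (by positivity), mul_inv,
    mul_inv_cancel_left₀ (by positivity)]

lemma C_sqrt_mul_self {x : ℝ} (hx : 0 ≤ x) : C √x * C √x = C x := by
  rw [← C_mul, Real.mul_self_sqrt hx]

lemma sqrt_succ_mul_hermiteN_succ (k : ℕ) :
    C √((k : ℝ) + 1) * hermiteN (k + 1) = X * hermiteN k - derivative (hermiteN k) := by
  rw [hermiteN, ← mul_assoc, ← C_mul, sqrt_succ_mul_inv_sqrt_factorial_succ, hermite_succ,
    hermiteN, derivative_C_mul, derivative_map, Polynomial.map_sub, Polynomial.map_mul, map_X]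
  ring

lemma derivative_hermiteN_succ (k : ℕ) :
    derivative (hermiteN (k + 1)) = C √((k : ℝ) + 1) * hermiteN k := by
  have hsq := C_sqrt_mul_self (x := (k : ℝ) + 1) (by positivity)
  rw [C_add, C_1, C_eq_natCast] at hsq
  rw [hermiteN, hermiteN, ← sqrt_succ_mul_inv_sqrt_factorial_succ k, derivative_C_mul,
    derivative_map, derivative_hermite_succ, C_mul, Polynomial.map_mul, Polynomial.map_add,
    Polynomial.map_natCast, Polynomial.map_one, ← hsq]
  ring

lemma derivative_derivative_hermiteN (k : ℕ) :
    derivative (derivative (hermiteN k)) =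
      X * derivative (hermiteN k) - C (k : ℝ) * hermiteN k := by
  have hsq := C_sqrt_mul_self (x := (k : ℝ) + 1) (by positivity)
  rw [C_add, C_1] at hsq
  have h := congrArg derivative (sqrt_succ_mul_hermiteN_succ k)
  rw [derivative_C_mul, derivative_hermiteN_succ, derivative_sub, derivative_mul,
    derivative_X] at h
  linear_combination h - hsq * hermiteN k

lemma eval_zero_derivative_hermiteN (k : ℕ) :
    (derivative (hermiteN k)).eval 0 = -(√((k : ℝ) + 1) * (hermiteN (k + 1)).eval 0) := by
  have h := congrArg (eval 0) (sqrt_succ_mul_hermiteN_succ k)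
  simp only [eval_mul, eval_C, eval_sub, eval_X, zero_mul, zero_sub] at h
  rw [h, neg_neg]

lemma eval_zero_hermiteN_add_two_sq (k : ℕ) :
    ((k : ℝ) + 2) * (hermiteN (k + 2)).eval 0 ^ 2 = (k + 1) * (hermiteN k).eval 0 ^ 2 := by
  have h := eval_zero_derivative_hermiteN (k + 1)
  rw [derivative_hermiteN_succ, eval_mul, eval_C] at h
  have hsq := congrArg (· ^ 2) h
  simp only [neg_sq, mul_pow] at hsq
  rw [Real.sq_sqrt (by positivity), Real.sq_sqrt (by positivity)] at hsq
  push_cast at hsq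
  linear_combination -hsq

lemma eval_zero_hermiteN_sq_le (k : ℕ) : (hermiteN k).eval 0 ^ 2 ≤ 1 / √((k : ℝ) + 1) := by
  induction k using Nat.twoStepInduction with
  | zero => simp [hermiteN]
  | one => simp [hermiteN]
  | more k ih _ =>
    have hstep : (hermiteN (k + 2)).eval 0 ^ 2 =
        ((k : ℝ) + 1) / (k + 2) * (hermiteN k).eval 0 ^ 2 := by
      field_simp
      linear_combination eval_zero_hermiteN_add_two_sq k
    have hgeom : √(((k : ℝ) + 1) * (k + 3)) ≤ k + 2 :=
      Real.sqrt_le_iff.2 ⟨by positivity, by nlinarith⟩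
    push_cast
    rw [add_assoc, show (2 + 1 : ℝ) = 3 by norm_num, hstep]
    calc ((k : ℝ) + 1) / (k + 2) * (hermiteN k).eval 0 ^ 2
        ≤ (k + 1) / (k + 2) * (1 / √(k + 1)) := by gcongr
      _ = √(k + 1) / (k + 2) := by rw [div_mul_eq_mul_div, mul_one_div, Real.div_sqrt]
      _ ≤ 1 / √(k + 3) := by
          rw [div_le_div_iff₀ (by positivity) (by positivity), ← Real.sqrt_mul (by positivity),
            one_mul]
          exact hgeom

/-- The energy `H_k'(x)² + k H_k(x)²` of the Hermite equation `y'' = x y' - k y`, which bounds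
`H_k` and its derivative simultaneously. -/
noncomputable def hermiteEnergy (k : ℕ) (x : ℝ) : ℝ :=
  (derivative (hermiteN k)).eval x ^ 2 + k * (hermiteN k).eval x ^ 2

lemma hermiteEnergy_zero_le (k : ℕ) : hermiteEnergy k 0 ≤ 2 * √((k : ℝ) + 1) := by
  have hderiv : (derivative (hermiteN k)).eval 0 ^ 2 ≤ √((k : ℝ) + 1) :=
    calc (derivative (hermiteN k)).eval 0 ^ 2
        = (k + 1) * (hermiteN (k + 1)).eval 0 ^ 2 := by
          rw [eval_zero_derivative_hermiteN, neg_sq, mul_pow, Real.sq_sqrt (by positivity)]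
      _ ≤ (k + 1) * (1 / √((k + 1 : ℕ) + 1)) := by
          gcongr
          exact eval_zero_hermiteN_sq_le (k + 1)
      _ ≤ (k + 1) * (1 / √(k + 1)) := by
          gcongr
          simp
      _ = √(k + 1) := by rw [mul_one_div, Real.div_sqrt]
  have hvalue : k * (hermiteN k).eval 0 ^ 2 ≤ √((k : ℝ) + 1) :=
    calc k * (hermiteN k).eval 0 ^ 2
        ≤ (k + 1) * (1 / √(k + 1)) := by
          gcongr
          · simp
          · exact eval_zero_hermiteN_sq_le k
      _ = √(k + 1) := by rw [mul_one_div, Real.div_sqrt]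
  rw [hermiteEnergy]
  linarith

lemma hermiteEnergy_le (k : ℕ) (u : ℝ) :
    hermiteEnergy k u ≤ Real.exp (u ^ 2) * (2 * √((k : ℝ) + 1)) := by
  have hode (x : ℝ) : HasDerivAt (fun x ↦ (derivative (hermiteN k)).eval x)
      (x * (derivative (hermiteN k)).eval x - k * (hermiteN k).eval x) x := by
    simpa only [derivative_derivative_hermiteN, eval_sub, eval_mul, eval_X, eval_C] using
      (derivative (hermiteN k)).hasDerivAt x
  refine (energy_le_exp_sq_mul_of_hermite_ode k.cast_nonneg
    (hermiteN k).hasDerivAt hode u).trans ?_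
  gcongr
  exact hermiteEnergy_zero_le k

lemma two_mul_exp_mul_rpow_sq {s : ℝ} (hs : 0 ≤ s) (u r : ℝ) :
    (2 * Real.exp (u ^ 2 / 2) * s ^ (r / 4)) ^ 2 = 4 * Real.exp (u ^ 2) * s ^ (r / 2) := by
  rw [mul_pow, mul_pow, ← Real.exp_nat_mul, ← Real.rpow_mul_natCast hs]
  push_cast
  rw [mul_div_cancel₀ _ two_ne_zero, div_mul_eq_mul_div, mul_div_assoc]
  norm_num [div_eq_mul_inv]

lemma abs_eval_derivative_hermiteN_le (k : ℕ) (u : ℝ) :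
    |(derivative (hermiteN k)).eval u| ≤
      2 * Real.exp (u ^ 2 / 2) * ((k : ℝ) + 1) ^ (1 / 4 : ℝ) := by
  have henergy := hermiteEnergy_le k u
  rw [hermiteEnergy] at henergy
  have hvalue : 0 ≤ k * (hermiteN k).eval u ^ 2 := by positivity
  have hpos : 0 ≤ Real.exp (u ^ 2) * √((k : ℝ) + 1) := by positivity
  apply abs_le_of_sq_le_sq _ (by positivity)
  rw [two_mul_exp_mul_rpow_sq (by positivity), ← Real.sqrt_eq_rpow]
  linarith

lemma abs_eval_hermiteN_le (k : ℕ) (u : ℝ) :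
    |(hermiteN k).eval u| ≤ 2 * Real.exp (u ^ 2 / 2) * ((k : ℝ) + 1) ^ (-1 / 4 : ℝ) := by
  -- For `k = 0` the energy carries no information on `H_k` itself.
  rcases k.eq_zero_or_pos with rfl | hk
  · have hexp : 1 ≤ Real.exp (u ^ 2 / 2) := Real.one_le_exp (by positivity)
    simp only [hermiteN, Nat.factorial_zero, Nat.cast_one, Real.sqrt_one, inv_one, hermite_zero,
      map_one, Polynomial.map_one, mul_one, eval_one, abs_one, Nat.cast_zero, zero_add,
      Real.one_rpow]
    linarith
  have hk₁ : (1 : ℝ) ≤ k := Nat.one_le_cast.2 hk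
  have hsqrt : √((k : ℝ) + 1) = (k + 1) * ((k : ℝ) + 1) ^ (-1 / 2 : ℝ) := by
    rw [Real.sqrt_eq_rpow, ← Real.rpow_one_add' (by positivity) (by norm_num)]
    norm_num
  have henergy : k * (hermiteN k).eval u ^ 2 ≤ Real.exp (u ^ 2) * (2 * √((k : ℝ) + 1)) :=
    (le_add_of_nonneg_left (sq_nonneg _)).trans (hermiteEnergy_le k u)
  have hsq : ((k : ℝ) + 1) * (hermiteN k).eval u ^ 2 ≤
      (k + 1) * (4 * Real.exp (u ^ 2) * ((k : ℝ) + 1) ^ (-1 / 2 : ℝ)) :=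
    calc ((k : ℝ) + 1) * (hermiteN k).eval u ^ 2
        ≤ 2 * (k * (hermiteN k).eval u ^ 2) := by
          rw [← mul_assoc]
          gcongr
          linarith
      _ ≤ 2 * (Real.exp (u ^ 2) * (2 * √((k : ℝ) + 1))) := by gcongr
      _ = (k + 1) * (4 * Real.exp (u ^ 2) * ((k : ℝ) + 1) ^ (-1 / 2 : ℝ)) := by
          rw [hsqrt]
          ring
  apply abs_le_of_sq_le_sq _ (by positivity)
  rw [two_mul_exp_mul_rpow_sq (by positivity)]
  exact le_of_mul_le_mul_left hsq (by positivity)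

lemma abs_eval_zero_sub_eval_hermiteN_le (k : ℕ) (u : ℝ) :
    |(hermiteN k).eval 0 - (hermiteN k).eval u| ≤
      4 * Real.exp (u ^ 2 / 2) * ((k : ℝ) + 1) ^ (-1 / 4 : ℝ) := by
  have hzero : |(hermiteN k).eval 0| ≤
      2 * Real.exp (u ^ 2 / 2) * ((k : ℝ) + 1) ^ (-1 / 4 : ℝ) := by
    refine (abs_eval_hermiteN_le k 0).trans ?_
    gcongr 2 * Real.exp (?_ / 2) * _
    simpa using sq_nonneg u
  linarith [abs_sub ((hermiteN k).eval 0) ((hermiteN k).eval u), abs_eval_hermiteN_le k u]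

lemma abs_eval_zero_sub_eval_hermiteN_le_mul_abs (k : ℕ) (u : ℝ) :
    |(hermiteN k).eval 0 - (hermiteN k).eval u| ≤
      2 * Real.exp (u ^ 2 / 2) * ((k : ℝ) + 1) ^ (1 / 4 : ℝ) * |u| := by
  have hbound : ∀ x ∈ Set.Icc (-|u|) |u|, ‖(derivative (hermiteN k)).eval x‖ ≤
      2 * Real.exp (u ^ 2 / 2) * ((k : ℝ) + 1) ^ (1 / 4 : ℝ) := fun x hx ↦ by
    refine (abs_eval_derivative_hermiteN_le k x).trans ?_
    have hxu : x ^ 2 ≤ u ^ 2 := sq_le_sq.2 (abs_le.2 hx)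
    gcongr
  have h := (convex_Icc (-|u|) |u|).norm_image_sub_le_of_norm_hasDerivWithin_le
    (fun x _ ↦ ((hermiteN k).hasDerivAt x).hasDerivWithinAt) hbound
    (abs_le.1 le_rfl) (by simp : (0 : ℝ) ∈ Set.Icc (-|u|) |u|)
  simpa only [Real.norm_eq_abs, zero_sub, abs_neg] using h

theorem stmt16_general (k : ℕ) (u : ℝ) {γ : ℝ} (hγ : γ ∈ Set.Icc (0 : ℝ) 1) :
    |(hermiteN k).eval 0 - (hermiteN k).eval u| ≤
      4 * Real.exp (u ^ 2 / 2) * |u| ^ γ * ((k : ℝ) + 1) ^ ((2 * γ - 1) / 4) := by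
  have hlip : |(hermiteN k).eval 0 - (hermiteN k).eval u| ≤
      4 * Real.exp (u ^ 2 / 2) * (|u| * ((k : ℝ) + 1) ^ (1 / 4 : ℝ)) := by
    have : 0 ≤ Real.exp (u ^ 2 / 2) * ((k : ℝ) + 1) ^ (1 / 4 : ℝ) * |u| := by positivity
    linarith [abs_eval_zero_sub_eval_hermiteN_le_mul_abs k u]
  have hpow : (((k : ℝ) + 1) ^ (-1 / 4 : ℝ)) ^ (1 - γ) * (|u| * ((k : ℝ) + 1) ^ (1 / 4 : ℝ)) ^ γ =
      |u| ^ γ * ((k : ℝ) + 1) ^ ((2 * γ - 1) / 4) := by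
    have hs : 0 < (k : ℝ) + 1 := by positivity
    rw [Real.mul_rpow (abs_nonneg u) (by positivity), ← Real.rpow_mul hs.le, ← Real.rpow_mul hs.le,
      mul_left_comm, ← Real.rpow_add hs]
    ring_nf
  rw [mul_assoc _ (|u| ^ γ), ← hpow]
  exact le_mul_rpow_one_sub_mul_rpow (abs_nonneg _) (by positivity) (by positivity)
    (by positivity) (abs_eval_zero_sub_eval_hermiteN_le k u) hlip hγ

theorem stmt16 :
    ∃ C : ℝ, 0 < C ∧
      ∀ (k : ℕ) (u γ : ℝ), u ∈ Set.Icc (-1 : ℝ) 1 → γ ∈ Set.Icc (0 : ℝ) 1 →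
        |(hermiteN k).eval 0 - (hermiteN k).eval u|
          ≤ C * |u| ^ γ * ((k : ℝ) + 1) ^ (γ / 4) := by
  refine ⟨4 * Real.exp (1 / 2), by positivity, fun k u γ hu hγ ↦ (stmt16_general k u hγ).trans ?_⟩
  gcongr
  · exact (sq_le_one_iff_abs_le_one u).2 (abs_le.2 hu)
  · simp
  · linarith [hγ.2]
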